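/- Let n ≥ 1, let q > -1 be not an even integer, and let μ be a finite Borel signed measure on the unit sphere Ω of ℝⁿ that is symmetric (invariant under x ↦ -x). Define G(x) = ∫_Ω |(x,ξ)|^q dμ(ξ) for x ∈ ℝⁿ. Then for every even Schwartz function φ on ℝⁿ with 0 ∉ supp(φ), the Fourier transform Ĝ of G in the sense of tempered distributions satisfies (Ĝ, φ) = (2π)^{n-1} C_q ∫_Ω (∫_ℝ |t|^{-1-q} φ(tξ) dt) dμ(ξ). -/

import Mathlib

open MeasureTheory Metric
open scoped Real RealInnerProductSpace ENNReal

noncomputable section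

/-- The constant `C_q = 2^{q+1} √π Γ((q+1)/2) / Γ(-q/2)`. -/
def Cq (q : ℝ) : ℝ :=
  (2 : ℝ) ^ (q + 1) * Real.sqrt π * Real.Gamma ((q + 1) / 2) / Real.Gamma (-q / 2)

/-- The (non-unitary) Fourier transform `φ̂(ξ) = ∫_{ℝⁿ} φ(x) e^{-i(x,ξ)} dx`. -/
def ftNU {n : ℕ} (φ : EuclideanSpace ℝ (Fin n) → ℂ) (ξ : EuclideanSpace ℝ (Fin n)) : ℂ :=
  ∫ x, Complex.exp (-Complex.I * (⟪x, ξ⟫ : ℂ)) * φ x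

/-- Integral of a real function against a signed measure, via the Jordan decomposition. -/
def sInt {α : Type*} [MeasurableSpace α] (μ : SignedMeasure α) (f : α → ℝ) : ℝ :=
  (∫ x, f x ∂μ.toJordanDecomposition.posPart) - ∫ x, f x ∂μ.toJordanDecomposition.negPart

/-- Integral of a complex function against a signed measure, via the Jordan decomposition. -/
def csInt {α : Type*} [MeasurableSpace α] (μ : SignedMeasure α) (f : α → ℂ) : ℂ :=
  (∫ x, f x ∂μ.toJordanDecomposition.posPart) - ∫ x, f x ∂μ.toJordanDecomposition.negPart

/-!
For `-1 < Re z < 0` the power `|r| ^ z` is a Mellin superposition of the Gaussians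
`exp (-π v r²)`, `v > 0`. Pairing the Gaussian in `⟪x, ξ⟫` with the inverse Fourier transform of
`φ` is, up to the factor `v ^ (-1/2)`, pairing the Gaussian of parameter `1/v` on the line `ℝ ξ`
with `φ`. The substitution `v ↦ 1/v` in the Mellin integral therefore shows that the Fourier
transform of `|⟪x, ξ⟫| ^ z` is carried by the line `ℝ ξ` with density `c(z) |t| ^ (-1 - z)`.
Since `φ` vanishes near the origin, both sides are holomorphic for `Re z > -1`, so the identity
persists there. It is then integrated over the sphere; Fubini applies because the integral of
`|⟪x, ξ⟫| ^ q * ‖f x‖` is bounded uniformly in the unit vector `ξ`: a radial majorant of `f`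
makes it rotation invariant.
-/

section FourierOfRidgePowers

open Set Filter Topology FourierTransform Module
open scoped SchwartzMap

section DominatedPowers

variable {α : Type*} [MeasurableSpace α] {m : Measure α} {r : α → ℝ} {g : α → ℂ}

lemma integrable_ofReal_cpow_mul_iff (hr : Measurable r) (hr_pos : ∀ᵐ x ∂m, 0 < r x)
    (hg : AEStronglyMeasurable g m) (z : ℂ) :
    Integrable (fun x => (r x : ℂ) ^ z * g x) m ↔
      Integrable (fun x => r x ^ z.re * ‖g x‖) m := by
  have hmeas : AEStronglyMeasurable (fun x => (r x : ℂ) ^ z * g x) m :=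
    (by fun_prop : Measurable fun x => (r x : ℂ) ^ z).aestronglyMeasurable.mul hg
  rw [← integrable_norm_iff hmeas]
  refine integrable_congr ?_
  filter_upwards [hr_pos] with x hx
  rw [norm_mul, Complex.norm_cpow_eq_rpow_re_of_pos hx]

lemma rpow_le_rpow_add_rpow {y a b c : ℝ} (hy : 0 < y) (hab : a ≤ b) (hbc : b ≤ c) :
    y ^ b ≤ y ^ a + y ^ c := by
  rcases le_total 1 y with h | h
  · exact (Real.rpow_le_rpow_of_exponent_le h hbc).trans (le_add_of_nonneg_left (by positivity))
  · exact (Real.rpow_le_rpow_of_exponent_ge hy h hab).trans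
      (le_add_of_nonneg_right (by positivity))

lemma abs_log_le_rpow_add_rpow_neg_div {y ε : ℝ} (hy : 0 < y) (hε : 0 < ε) :
    |Real.log y| ≤ (y ^ ε + y ^ (-ε)) / ε := by
  have h_log := Real.log_le_rpow_div hy.le hε
  have h_log_inv := Real.log_le_rpow_div (inv_pos.2 hy).le hε
  rw [Real.log_inv, Real.inv_rpow hy.le, ← Real.rpow_neg hy.le] at h_log_inv
  have hy_ε : 0 ≤ y ^ ε / ε := by positivity
  have hy_neg_ε : 0 ≤ y ^ (-ε) / ε := by positivity
  rw [abs_le', add_div]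
  constructor <;> linarith

lemma rpow_mul_abs_log_le {y a b c ε : ℝ} (hy : 0 < y) (hε : 0 < ε) (hab : a + ε ≤ b)
    (hbc : b + ε ≤ c) : y ^ b * |Real.log y| ≤ 2 / ε * (y ^ a + y ^ c) :=
  calc y ^ b * |Real.log y|
      ≤ y ^ b * ((y ^ ε + y ^ (-ε)) / ε) := by
        gcongr; exact abs_log_le_rpow_add_rpow_neg_div hy hε
    _ = (y ^ (b + ε) + y ^ (b - ε)) / ε := by
        rw [Real.rpow_add hy, sub_eq_add_neg, Real.rpow_add hy]; ring
    _ ≤ ((y ^ a + y ^ c) + (y ^ a + y ^ c)) / ε := by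
        gcongr <;> apply rpow_le_rpow_add_rpow hy <;> linarith
    _ = 2 / ε * (y ^ a + y ^ c) := by ring

lemma norm_ofReal_cpow_mul_log_le {y ε : ℝ} {z w : ℂ} (hy : 0 < y) (hε : 0 < ε)
    (hw : w ∈ ball z ε) :
    ‖(y : ℂ) ^ w * Complex.log y‖ ≤ 2 / ε * (y ^ (z.re - 2 * ε) + y ^ (z.re + 2 * ε)) := by
  have h_re : |w.re - z.re| < ε :=
    (Complex.abs_re_le_norm (w - z)).trans_lt (mem_ball_iff_norm.1 hw)
  rw [abs_lt] at h_re
  rw [norm_mul, Complex.norm_cpow_eq_rpow_re_of_pos hy, ← Complex.ofReal_log hy.le,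
    Complex.norm_real, Real.norm_eq_abs]
  exact rpow_mul_abs_log_le hy hε (by linarith) (by linarith)

lemma differentiableAt_integral_ofReal_cpow_mul (hr : Measurable r)
    (hr_pos : ∀ᵐ x ∂m, 0 < r x) (hg : AEStronglyMeasurable g m) {z : ℂ}
    (hint : ∀ᶠ a in 𝓝 z.re, Integrable (fun x => r x ^ a * ‖g x‖) m) :
    DifferentiableAt ℂ (fun w => ∫ x, (r x : ℂ) ^ w * g x ∂m) z := by
  obtain ⟨δ, hδ, hball⟩ := Metric.eventually_nhds_iff_ball.1 hint
  obtain ⟨ε, hε, hεδ⟩ : ∃ ε > 0, 2 * ε < δ := ⟨δ / 3, by positivity, by linarith⟩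
  have hint_sub := hball (z.re - 2 * ε) (by simpa [Real.dist_eq, abs_of_pos hε])
  have hint_add := hball (z.re + 2 * ε) (by simpa [Real.dist_eq, abs_of_pos hε])
  have hmeas {h : α → ℂ} (hh : Measurable h) : AEStronglyMeasurable (fun x => h x * g x) m :=
    hh.aestronglyMeasurable.mul hg
  refine (hasDerivAt_integral_of_dominated_loc_of_deriv_le (𝕜 := ℂ)
    (F' := fun w x => (r x : ℂ) ^ w * Complex.log (r x) * g x)
    (bound := fun x =>
      2 / ε * (r x ^ (z.re - 2 * ε) * ‖g x‖ + r x ^ (z.re + 2 * ε) * ‖g x‖))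
    (ball_mem_nhds z hε) (.of_forall fun w => hmeas (by fun_prop))
    ((integrable_ofReal_cpow_mul_iff hr hr_pos hg z).2 hint.self_of_nhds)
    (hmeas (by fun_prop)) ?_ ((hint_sub.add hint_add).const_mul _) ?_).2.differentiableAt
  · filter_upwards [hr_pos] with x hx w hw
    rw [norm_mul, ← add_mul, ← mul_assoc]
    gcongr
    exact norm_ofReal_cpow_mul_log_le hx hε hw
  · filter_upwards [hr_pos] with x hx w _
    simpa using ((hasDerivAt_id w).const_cpow
      (Or.inl (Complex.ofReal_ne_zero.2 hx.ne'))).mul_const (g x)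

end DominatedPowers

section MellinLaplace

variable {α : Type*} [MeasurableSpace α] {m : Measure α} {ρ : α → ℝ} {g : α → ℂ} {s : ℂ}

lemma inv_ofReal_cpow {y : ℝ} (hy : 0 ≤ y) (w : ℂ) : ((y : ℂ)⁻¹) ^ w = (y : ℂ) ^ (-w) := by
  have h_arg : (y : ℂ).arg ≠ π := by
    rw [Complex.arg_ofReal_of_nonneg hy]
    exact Real.pi_ne_zero.symm
  rw [Complex.inv_cpow _ _ h_arg, Complex.cpow_neg]

lemma integrable_cpow_mul_exp_neg_mul_mul [SFinite m] (hρ : Measurable ρ)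
    (hρ_pos : ∀ᵐ x ∂m, 0 < ρ x) (hg : AEStronglyMeasurable g m) (hs : 0 < s.re)
    (hint : Integrable (fun x => (ρ x : ℂ) ^ (-s) * g x) m) :
    Integrable (fun p : ℝ × α => (p.1 : ℂ) ^ (s - 1) * Complex.exp (-(ρ p.2 * p.1)) * g p.2)
      ((volume.restrict (Ioi 0)).prod m) := by
  have hmeas : Measurable fun p : ℝ × α =>
      (p.1 : ℂ) ^ (s - 1) * Complex.exp (-(ρ p.2 * p.1)) := by fun_prop
  have hnorm (x : α) (v : ℝ) (hv : v ∈ Ioi 0) :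
      ‖(v : ℂ) ^ (s - 1) * Complex.exp (-(ρ x * v))‖ =
        v ^ (s.re - 1) * Real.exp (-(ρ x * v)) := by
    rw [norm_mul, Complex.norm_cpow_eq_rpow_re_of_pos hv, Complex.norm_exp]
    norm_cast
  refine (integrable_prod_iff' (hmeas.aestronglyMeasurable.mul hg.comp_snd)).2 ⟨?_, ?_⟩
  · filter_upwards [hρ_pos] with x hx
    have h_real := integrableOn_rpow_mul_exp_neg_mul_rpow (s := s.re - 1) (p := 1)
      (by linarith) one_pos hx
    have h_cpow : IntegrableOn
        (fun v : ℝ => (v : ℂ) ^ (s - 1) * Complex.exp (-(ρ x * v))) (Ioi 0) := by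
      refine h_real.mono' (by fun_prop : Measurable _).aestronglyMeasurable ?_
      filter_upwards [ae_restrict_mem measurableSet_Ioi] with v hv
      rw [hnorm x v hv, Real.rpow_one, neg_mul]
    exact h_cpow.mul_const (g x)
  · refine (((integrable_ofReal_cpow_mul_iff hρ hρ_pos hg (-s)).1 hint).const_mul
      (Real.Gamma s.re)).congr ?_
    filter_upwards [hρ_pos] with x hx
    simp_rw [Pi.mul_apply, norm_mul _ (g x)]
    rw [integral_mul_const, setIntegral_congr_fun measurableSet_Ioi (hnorm x),
      Real.integral_rpow_mul_exp_neg_mul_Ioi hs hx, Complex.neg_re, one_div,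
      Real.inv_rpow hx.le, Real.rpow_neg hx.le]
    ring

lemma mellin_integral_exp_neg_mul [SFinite m] (hρ : Measurable ρ) (hρ_pos : ∀ᵐ x ∂m, 0 < ρ x)
    (hg : AEStronglyMeasurable g m) (hs : 0 < s.re)
    (hint : Integrable (fun x => (ρ x : ℂ) ^ (-s) * g x) m) :
    mellin (fun v => ∫ x, Complex.exp (-(ρ x * v)) * g x ∂m) s =
      Complex.Gamma s * ∫ x, (ρ x : ℂ) ^ (-s) * g x ∂m := by
  calc mellin (fun v => ∫ x, Complex.exp (-(ρ x * v)) * g x ∂m) s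
      = ∫ v in Ioi (0 : ℝ), ∫ x,
          (v : ℂ) ^ (s - 1) * Complex.exp (-(ρ x * v)) * g x ∂m := by
        simp only [mellin, smul_eq_mul, ← integral_const_mul, mul_assoc]
    _ = ∫ x, (∫ v in Ioi (0 : ℝ),
          (v : ℂ) ^ (s - 1) * Complex.exp (-(ρ x * v)) * g x) ∂m :=
        integral_integral_swap (integrable_cpow_mul_exp_neg_mul_mul hρ hρ_pos hg hs hint)
    _ = ∫ x, Complex.Gamma s * ((ρ x : ℂ) ^ (-s) * g x) ∂m := by
        refine integral_congr_ae ?_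
        filter_upwards [hρ_pos] with x hx
        rw [integral_mul_const, Complex.integral_cpow_mul_exp_neg_mul_Ioi hs hx, one_div,
          inv_ofReal_cpow hx.le]
        ring
    _ = Complex.Gamma s * ∫ x, (ρ x : ℂ) ^ (-s) * g x ∂m := integral_const_mul _ _

end MellinLaplace

section Integrability

variable {E : Type*} [NormedAddCommGroup E] [InnerProductSpace ℝ E]

lemma integrable_abs_rpow_mul_inv_one_add_abs_pow {q : ℝ} (hq : -1 < q) {k : ℕ}
    (hk : q + 1 < k) : Integrable fun t : ℝ => |t| ^ q * ((1 + |t|) ^ k)⁻¹ := by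
  have h_mellin : IntegrableOn (fun t : ℝ => t ^ (q + 1 - 1) * ((1 + t) ^ k)⁻¹) (Ioi 0) := by
    refine mellin_convergent_of_isBigO_scalar (a := k) (b := 0) ?_ ?_ hk ?_ (by linarith)
    · refine ContinuousOn.locallyIntegrableOn (fun t ht => ?_) measurableSet_Ioi
      have ht : 1 + t ≠ 0 := by linarith [mem_Ioi.1 ht]
      exact ContinuousAt.continuousWithinAt (by fun_prop (disch := positivity))
    · refine .of_bound 1 ?_
      filter_upwards [eventually_gt_atTop 0] with t ht
      rw [Real.rpow_neg ht.le, Real.rpow_natCast, one_mul, Real.norm_of_nonneg (by positivity),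
        Real.norm_of_nonneg (by positivity)]
      gcongr
      linarith
    · refine .of_bound 1 ?_
      filter_upwards [self_mem_nhdsWithin] with t ht
      have ht : 0 < t := ht
      rw [neg_zero, Real.rpow_zero, norm_one, one_mul, Real.norm_of_nonneg (by positivity)]
      exact inv_le_one_of_one_le₀ (one_le_pow₀ (by linarith))
  refine (integrable_fun_norm_addHaar (volume : Measure ℝ)
    (f := fun t => t ^ q * ((1 + t) ^ k)⁻¹)).2 ?_
  simpa using h_mellin

lemma inv_one_add_norm_pow_le_prod {ι : Type*} [Fintype ι] (b : OrthonormalBasis ι ℝ E) (k : ℕ)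
    (x : E) : ((1 + ‖x‖) ^ (Fintype.card ι * k))⁻¹ ≤ ∏ i, ((1 + |⟪b i, x⟫|) ^ k)⁻¹ := by
  have h_coord (i : ι) : |⟪b i, x⟫| ≤ ‖x‖ := by
    simpa using abs_real_inner_le_norm (b i) x
  calc ((1 + ‖x‖) ^ (Fintype.card ι * k))⁻¹ = ∏ _i : ι, ((1 + ‖x‖) ^ k)⁻¹ := by
        rw [Finset.prod_const, Finset.card_univ, inv_pow, ← pow_mul, mul_comm]
    _ ≤ ∏ i, ((1 + |⟪b i, x⟫|) ^ k)⁻¹ := by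
        gcongr with i
        exact h_coord i

lemma exists_norm_le_mul_inv_one_add_norm_pow (f : 𝓢(E, ℂ)) (k : ℕ) :
    ∃ C : ℝ, ∀ x, ‖f x‖ ≤ C * ((1 + ‖x‖) ^ k)⁻¹ := by
  refine ⟨2 ^ k * ((Finset.Iic (k, 0)).sup fun m => SchwartzMap.seminorm ℝ m.1 m.2) f,
    fun x => ?_⟩
  rw [← div_eq_mul_inv, le_div_iff₀' (by positivity)]
  simpa using SchwartzMap.one_add_le_sup_seminorm_apply (𝕜 := ℝ) (m := (k, 0)) le_rfl le_rfl f x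

variable [FiniteDimensional ℝ E] [MeasurableSpace E] [BorelSpace E]

lemma integrable_prod_comp_inner {ι : Type*} [Fintype ι] (b : OrthonormalBasis ι ℝ E)
    {f : ι → ℝ → ℝ} (hf : ∀ i, Integrable (f i)) :
    Integrable fun x : E => ∏ i, f i ⟪b i, x⟫ := by
  simpa [Function.comp_def, b.repr_apply_apply] using
    ((PiLp.volume_preserving_ofLp ι).comp b.measurePreserving_repr).integrable_comp_of_integrable
      (Integrable.fintype_prod hf)

lemma integral_comp_inner_norm_eq_of_norm_eq {ξ η : E} (h : ‖ξ‖ = ‖η‖) (F : ℝ → ℝ → ℝ) :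
    ∫ x, F ⟪x, ξ⟫ ‖x‖ = ∫ x, F ⟪x, η⟫ ‖x‖ := by
  let R : E ≃ₗᵢ[ℝ] E := (ℝ ∙ (ξ - η))ᗮ.reflection
  have hR : R ξ = η := Submodule.reflection_sub h
  rw [← R.measurePreserving.integral_comp R.toHomeomorph.measurableEmbedding
    (fun x => F ⟪x, η⟫ ‖x‖)]
  simp only [← hR, R.inner_map_map, R.norm_map]

lemma ae_inner_ne_zero {ξ : E} (hξ : ξ ≠ 0) : ∀ᵐ x : E, ⟪x, ξ⟫ ≠ 0 := by
  have h_ne_top : (ℝ ∙ ξ)ᗮ ≠ ⊤ := by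
    rwa [ne_eq, Submodule.orthogonal_eq_top_iff, Submodule.span_singleton_eq_bot]
  filter_upwards [measure_eq_zero_iff_ae_notMem.1 (Measure.addHaar_submodule volume _ h_ne_top)]
    with x hx
  rwa [SetLike.mem_coe, Submodule.mem_orthogonal_singleton_iff_inner_left] at hx

lemma integrable_abs_inner_rpow_mul_inv_one_add_norm_pow {ξ : E} (hξ : ‖ξ‖ = 1) {q : ℝ}
    (hq : -1 < q) {k : ℕ} (hqk : q + 1 < k) (hk : 1 < k) :
    Integrable fun x : E => |⟪x, ξ⟫| ^ q * ((1 + ‖x‖) ^ (finrank ℝ E * k))⁻¹ := by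
  classical
  obtain ⟨u, b, hu, hb⟩ := Orthonormal.exists_orthonormalBasis_extension (𝕜 := ℝ) (v := {ξ})
    (by simpa [orthonormal_iff_ite] using hξ)
  let i₀ : u := ⟨ξ, hu rfl⟩
  let coordFactor (i : u) (t : ℝ) : ℝ := (if i = i₀ then |t| ^ q else 1) * ((1 + |t|) ^ k)⁻¹
  have h_factor (i : u) : Integrable (coordFactor i) := by
    by_cases hi : i = i₀
    · simpa [coordFactor, hi] using integrable_abs_rpow_mul_inv_one_add_abs_pow hq hqk
    · simpa [coordFactor, hi] using integrable_abs_rpow_mul_inv_one_add_abs_pow (q := 0)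
        (by norm_num) (k := k) (by simpa using hk)
  refine (integrable_prod_comp_inner b h_factor).mono' (by fun_prop) (.of_forall fun x => ?_)
  rw [Real.norm_of_nonneg (by positivity)]
  calc |⟪x, ξ⟫| ^ q * ((1 + ‖x‖) ^ (finrank ℝ E * k))⁻¹
      ≤ |⟪x, ξ⟫| ^ q * ∏ i, ((1 + |⟪b i, x⟫|) ^ k)⁻¹ := by
        rw [finrank_eq_card_basis b.toBasis]
        gcongr
        exact inv_one_add_norm_pow_le_prod b k x
    _ = ∏ i, coordFactor i ⟪b i, x⟫ := by
        rw [Finset.prod_mul_distrib, Finset.prod_ite_eq' Finset.univ i₀,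
          if_pos (Finset.mem_univ _), hb, real_inner_comm]

lemma exists_integral_abs_inner_rpow_mul_norm_le [Nontrivial E] {q : ℝ} (hq : -1 < q)
    (f : 𝓢(E, ℂ)) :
    ∃ K : ℝ, ∀ ξ : E, ‖ξ‖ = 1 → Integrable (fun x => |⟪x, ξ⟫| ^ q * ‖f x‖) ∧
      ∫ x, |⟪x, ξ⟫| ^ q * ‖f x‖ ≤ K := by
  obtain ⟨k, hk⟩ := exists_nat_gt (max (q + 1) 1)
  obtain ⟨hqk, hk⟩ := max_lt_iff.1 hk
  obtain ⟨C, hC⟩ := exists_norm_le_mul_inv_one_add_norm_pow f (finrank ℝ E * k)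
  obtain ⟨η, hη⟩ := exists_norm_eq E zero_le_one
  let majorant (ξ x : E) : ℝ := |⟪x, ξ⟫| ^ q * ((1 + ‖x‖) ^ (finrank ℝ E * k))⁻¹
  refine ⟨C * ∫ x, majorant η x, fun ξ hξ => ?_⟩
  have h_majorant : Integrable fun x => C * majorant ξ x :=
    (integrable_abs_inner_rpow_mul_inv_one_add_norm_pow hξ hq hqk (mod_cast hk)).const_mul C
  have h_le (x : E) : |⟪x, ξ⟫| ^ q * ‖f x‖ ≤ C * majorant ξ x := by
    rw [mul_left_comm]
    gcongr
    exact hC x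
  have h_int : Integrable fun x => |⟪x, ξ⟫| ^ q * ‖f x‖ := by
    have hf := f.continuous.measurable
    refine h_majorant.mono' (by fun_prop) (.of_forall fun x => ?_)
    rw [Real.norm_of_nonneg (by positivity)]
    exact h_le x
  refine ⟨h_int, ?_⟩
  calc ∫ x, |⟪x, ξ⟫| ^ q * ‖f x‖ ≤ ∫ x, C * majorant ξ x := integral_mono h_int h_majorant h_le
    _ = C * ∫ x, majorant η x := by
        rw [integral_const_mul]
        congr 1
        exact integral_comp_inner_norm_eq_of_norm_eq (hξ.trans hη.symm)
          fun t ρ => |t| ^ q * ((1 + ρ) ^ (finrank ℝ E * k))⁻¹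

lemma integrable_abs_inner_rpow_mul_norm {ξ : E} (hξ : ‖ξ‖ = 1) {q : ℝ} (hq : -1 < q)
    (f : 𝓢(E, ℂ)) : Integrable fun x => |⟪x, ξ⟫| ^ q * ‖f x‖ := by
  have : Nontrivial E := ⟨ξ, 0, ne_zero_of_norm_ne_zero (by simp [hξ])⟩
  obtain ⟨K, hK⟩ := exists_integral_abs_inner_rpow_mul_norm_le hq f
  exact (hK ξ hξ).1

lemma integrable_norm_rpow_mul_norm_of_zero_notMem_tsupport {φ : 𝓢(E, ℂ)}
    (hφ : 0 ∉ tsupport φ) (a : ℝ) : Integrable fun x => ‖x‖ ^ a * ‖φ x‖ := by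
  obtain ⟨δ, hδ, h_zero⟩ := Metric.eventually_nhds_iff.1 (notMem_tsupport_iff_eventuallyEq.1 hφ)
  obtain ⟨b, hab⟩ := exists_nat_ge a
  have hφ_meas := φ.continuous.measurable
  refine ((φ.integrable_pow_mul volume b).const_mul (δ ^ (a - b))).mono' (by fun_prop)
    (.of_forall fun x => ?_)
  rw [Real.norm_of_nonneg (by positivity), ← mul_assoc]
  rcases lt_or_ge ‖x‖ δ with hx | hx
  · simp [h_zero (y := x) (by simpa using hx)]
  · have hx_pos : 0 < ‖x‖ := hδ.trans_le hx
    gcongr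
    rw [← sub_add_cancel a b, Real.rpow_add hx_pos, Real.rpow_natCast, sub_add_cancel]
    exact mul_le_mul_of_nonneg_right
      (Real.rpow_le_rpow_of_nonpos hδ hx (sub_nonpos.2 hab)) (by positivity)

end Integrability

section FourierSlice

variable {E : Type*} [NormedAddCommGroup E] [InnerProductSpace ℝ E] [FiniteDimensional ℝ E]
  [MeasurableSpace E] [BorelSpace E] {f : E → ℂ}

lemma integral_fourier_comp_inner_mul {h : ℝ → ℂ} (hh : Integrable h) (hf : Integrable f)
    (ξ : E) : ∫ x, 𝓕 h ⟪x, ξ⟫ * f x = ∫ t, h t * 𝓕 f (t • ξ) := by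
  have h_cont : Continuous fun p : ℝ × E =>
      (innerₗ E).comp (LinearMap.toSpanSingleton ℝ E ξ) p.1 p.2 := by
    simp only [LinearMap.comp_apply, LinearMap.toSpanSingleton_apply, innerₗ_apply_apply]
    fun_prop
  have h_self_adjoint := VectorFourier.integral_fourierIntegral_smul_eq_flip (μ := volume)
    (ν := volume) Real.continuous_fourierChar h_cont hh hf
  simpa [VectorFourier.fourierIntegral, Real.fourier_eq, real_inner_smul_left,
    real_inner_smul_right, real_inner_comm, mul_comm] using h_self_adjoint

lemma integral_gaussian_comp_inner_mul (hf : Integrable f) (ξ : E) {v : ℝ} (hv : 0 < v) :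
    ∫ x, Complex.exp (-((π * ⟪x, ξ⟫ ^ 2 : ℝ) * v)) * f x =
      (v : ℂ) ^ (-(1 / 2) : ℂ) *
        ∫ t : ℝ, Complex.exp (-((π * t ^ 2 : ℝ) * (v⁻¹ : ℝ))) * 𝓕 f (t • ξ) := by
  have hb : 0 < ((v⁻¹ : ℝ) : ℂ).re := by simpa using hv
  have h_gaussian : Integrable fun t : ℝ => Complex.exp (-π * (v⁻¹ : ℝ) * t ^ 2) := by
    have h_re : 0 < ((π : ℂ) * (v⁻¹ : ℝ)).re := by
      rw [← Complex.ofReal_mul, Complex.ofReal_re]; positivity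
    simpa using integrable_cexp_neg_mul_sq h_re
  have hv_ne : (v : ℂ) ≠ 0 := Complex.ofReal_ne_zero.2 hv.ne'
  have h_sqrt : (v : ℂ) ^ (-(1 / 2) : ℂ) * (1 / ((v⁻¹ : ℝ) : ℂ) ^ (1 / 2 : ℂ)) = 1 := by
    rw [Complex.ofReal_inv, inv_ofReal_cpow hv.le, mul_one_div_cancel]
    simp [Complex.cpow_eq_zero_iff, hv_ne]
  calc ∫ x, Complex.exp (-((π * ⟪x, ξ⟫ ^ 2 : ℝ) * v)) * f x
      = (v : ℂ) ^ (-(1 / 2) : ℂ) *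
          ∫ x, 𝓕 (fun t : ℝ => Complex.exp (-π * (v⁻¹ : ℝ) * t ^ 2)) ⟪x, ξ⟫ * f x := by
        simp_rw [fourier_gaussian_pi hb, mul_assoc, integral_const_mul]
        rw [← mul_assoc, h_sqrt, one_mul]
        congr! 4
        push_cast
        field_simp
    _ = (v : ℂ) ^ (-(1 / 2) : ℂ) *
          ∫ t : ℝ, Complex.exp (-((π * t ^ 2 : ℝ) * (v⁻¹ : ℝ))) * 𝓕 f (t • ξ) := by
        rw [integral_fourier_comp_inner_mul h_gaussian hf ξ]
        congr! 5
        push_cast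
        ring

end FourierSlice

section GaussianMellin

lemma ofReal_pi_mul_sq_cpow_div_two {r : ℝ} (hr : r ≠ 0) (z : ℂ) :
    ((π * r ^ 2 : ℝ) : ℂ) ^ (z / 2) = (π : ℂ) ^ (z / 2) * ((|r| : ℝ) : ℂ) ^ z := by
  have h_abs : ((|r| : ℝ) : ℂ) ≠ 0 := Complex.ofReal_ne_zero.2 (abs_ne_zero.2 hr)
  rw [← sq_abs, sq, Complex.ofReal_mul,
    Complex.mul_cpow_ofReal_nonneg Real.pi_nonneg (by positivity), Complex.ofReal_mul,
    Complex.mul_cpow_ofReal_nonneg (abs_nonneg r) (abs_nonneg r),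
    ← Complex.cpow_add _ _ h_abs, add_halves]

lemma mellin_integral_gaussian {α : Type*} [MeasurableSpace α] {m : Measure α} [SFinite m]
    {r : α → ℝ} {g : α → ℂ} {z : ℂ} (hr : Measurable r) (hr_ne : ∀ᵐ x ∂m, r x ≠ 0)
    (hg : AEStronglyMeasurable g m) (hz : z.re < 0)
    (hint : Integrable (fun x => |r x| ^ z.re * ‖g x‖) m) :
    mellin (fun v => ∫ x, Complex.exp (-((π * r x ^ 2 : ℝ) * v)) * g x ∂m) (-z / 2) =
      Complex.Gamma (-z / 2) * (π : ℂ) ^ (z / 2) * ∫ x, ((|r x| : ℝ) : ℂ) ^ z * g x ∂m := by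
  have h_re : 0 < (-z / 2).re := by rw [Complex.div_ofNat_re, Complex.neg_re]; linarith
  have h_cpow : (fun x => ((π * r x ^ 2 : ℝ) : ℂ) ^ (-(-z / 2)) * g x) =ᵐ[m]
      fun x => (π : ℂ) ^ (z / 2) * (((|r x| : ℝ) : ℂ) ^ z * g x) := by
    filter_upwards [hr_ne] with x hx
    rw [neg_div, neg_neg, ofReal_pi_mul_sq_cpow_div_two hx, mul_assoc]
  have h_int : Integrable (fun x => ((|r x| : ℝ) : ℂ) ^ z * g x) m :=
    (integrable_ofReal_cpow_mul_iff hr.abs (hr_ne.mono fun x => abs_pos.2) hg z).2 hint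
  rw [mellin_integral_exp_neg_mul (by fun_prop) (hr_ne.mono fun x hx => by positivity) hg
    h_re ((h_int.const_mul _).congr h_cpow.symm), integral_congr_ae h_cpow,
    integral_const_mul, mul_assoc]

lemma mellin_eq_of_eq_cpow_mul_comp_inv {A B : ℝ → ℂ} {a : ℂ}
    (h : ∀ v, 0 < v → A v = (v : ℂ) ^ (-a) * B v⁻¹) (s : ℂ) :
    mellin A s = mellin B (a - s) :=
  calc mellin A s = mellin (fun v => (v : ℂ) ^ (-a) • B v⁻¹) s :=
        setIntegral_congr_fun measurableSet_Ioi fun v hv => by simp only [h v hv, smul_eq_mul]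
    _ = mellin B (a - s) := by
        rw [mellin_cpow_smul _ _ (-a), mellin_comp_inv, neg_add, neg_neg, neg_add_eq_sub]

end GaussianMellin

section RidgeFunctions

variable {E : Type*} [NormedAddCommGroup E] [InnerProductSpace ℝ E]

/-- The pairing `∫ |⟪x, ξ⟫|^z f(x) dx` of `f` with a power of a linear functional, as a function
of the complex exponent `z`. -/
def ridgeMoment [FiniteDimensional ℝ E] [MeasurableSpace E] [BorelSpace E]
    (f : 𝓢(E, ℂ)) (ξ : E) (z : ℂ) : ℂ :=
  ∫ x, ((|⟪x, ξ⟫| : ℝ) : ℂ) ^ z * f x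

/-- The moment `∫ |t|^z g(tξ) dt` of `g` along the line through `ξ`, as a function of the complex
exponent `z`. -/
def lineMoment (g : 𝓢(E, ℂ)) (ξ : E) (z : ℂ) : ℂ :=
  ∫ t : ℝ, ((|t| : ℝ) : ℂ) ^ z * g (t • ξ)

/-- The constant `c(z)` for which the Fourier transform of `|s|^z` on the line is
`c(z) |t|^{-1-z}`. The Gamma function in the denominator is entered through its reciprocal, which
is entire, so that `c` is holomorphic for `-1 < Re z` and vanishes at the even natural numbers. -/
def absCpowFourierConst (z : ℂ) : ℂ :=
  (π : ℂ) ^ (-z - 1 / 2) * Complex.Gamma ((z + 1) / 2) * (Complex.Gamma (-z / 2))⁻¹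

lemma integrable_abs_rpow_mul_norm_smul {φ : 𝓢(E, ℂ)} (hφ : 0 ∉ tsupport φ) {ξ : E}
    (hξ : ‖ξ‖ = 1) (a : ℝ) : Integrable fun t : ℝ => |t| ^ a * ‖φ (t • ξ)‖ := by
  let line : ℝ →ₗᵢ[ℝ] E := LinearIsometry.toSpanSingleton ℝ E hξ
  let φline : 𝓢(ℝ, ℂ) := SchwartzMap.compCLMOfAntilipschitz ℂ (g := line)
    line.toContinuousLinearMap.hasTemperateGrowth line.antilipschitz φ
  have h_zero : 0 ∉ tsupport φline := by
    rw [notMem_tsupport_iff_eventuallyEq] at hφ ⊢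
    exact (line.continuous.tendsto' 0 0 line.map_zero).eventually hφ
  exact integrable_norm_rpow_mul_norm_of_zero_notMem_tsupport h_zero a

lemma differentiable_lineMoment {φ : 𝓢(E, ℂ)} (hφ : 0 ∉ tsupport φ) {ξ : E} (hξ : ‖ξ‖ = 1) :
    Differentiable ℂ (lineMoment φ ξ) := fun _ =>
  differentiableAt_integral_ofReal_cpow_mul (by fun_prop)
    ((Measure.ae_ne volume 0).mono fun t => abs_pos.2)
    (φ.continuous.comp (by fun_prop)).aestronglyMeasurable
    (.of_forall (integrable_abs_rpow_mul_norm_smul hφ hξ))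

lemma differentiableAt_absCpowFourierConst {z : ℂ} (hz : -1 < z.re) :
    DifferentiableAt ℂ absCpowFourierConst z := by
  have hπ : (π : ℂ) ≠ 0 := Complex.ofReal_ne_zero.2 Real.pi_ne_zero
  have hΓ : DifferentiableAt ℂ (fun w : ℂ => Complex.Gamma ((w + 1) / 2)) z := by
    refine DifferentiableAt.comp z (Complex.differentiableAt_Gamma _ fun m h => ?_) (by fun_prop)
    have h_re := congr_arg Complex.re h
    simp only [Complex.div_ofNat_re, Complex.add_re, Complex.one_re, Complex.neg_re,
      Complex.natCast_re] at h_re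
    linarith
  have hΓ_inv : DifferentiableAt ℂ (fun w : ℂ => (Complex.Gamma (-w / 2))⁻¹) z :=
    Complex.differentiable_one_div_Gamma.differentiableAt.comp z (by fun_prop)
  have h_pow : DifferentiableAt ℂ (fun w : ℂ => (π : ℂ) ^ (-w - 1 / 2)) z :=
    DifferentiableAt.const_cpow (by fun_prop) (Or.inl hπ)
  exact (h_pow.mul hΓ).mul hΓ_inv

variable [FiniteDimensional ℝ E] [MeasurableSpace E] [BorelSpace E]

lemma Gamma_mul_ridgeMoment_fourierInv_eq {φ : 𝓢(E, ℂ)} (hφ : 0 ∉ tsupport φ) {ξ : E}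
    (hξ : ‖ξ‖ = 1) {z : ℂ} (hz_neg_one : -1 < z.re) (hz_zero : z.re < 0) :
    Complex.Gamma (-z / 2) * (π : ℂ) ^ (z / 2) * ridgeMoment (𝓕⁻ φ) ξ z =
      Complex.Gamma ((z + 1) / 2) * (π : ℂ) ^ ((-1 - z) / 2) * lineMoment φ ξ (-1 - z) := by
  have hξ_ne : ξ ≠ 0 := ne_zero_of_norm_ne_zero (by simp [hξ])
  set f : 𝓢(E, ℂ) := 𝓕⁻ φ with hf
  have hf_fourier : 𝓕 (f : E → ℂ) = φ := by
    rw [← SchwartzMap.fourier_coe, hf, FourierTransform.fourier_fourierInv_eq]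
  have h_ridge := mellin_integral_gaussian (m := volume) (r := fun x : E => ⟪x, ξ⟫) (g := f)
    (by fun_prop) (ae_inner_ne_zero hξ_ne) f.continuous.aestronglyMeasurable hz_zero
    (integrable_abs_inner_rpow_mul_norm hξ hz_neg_one f)
  have h_line := mellin_integral_gaussian (m := volume) (r := fun t : ℝ => t)
    (g := fun t => φ (t • ξ)) (z := -1 - z) measurable_id (Measure.ae_ne volume 0)
    (φ.continuous.comp (by fun_prop)).aestronglyMeasurable (by simpa using hz_neg_one)
    (integrable_abs_rpow_mul_norm_smul hφ hξ _)
  have h_exponent : (1 / 2 - -z / 2 : ℂ) = -(-1 - z) / 2 := by ring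
  have h_neg : (-(-1 - z) / 2 : ℂ) = (z + 1) / 2 := by ring
  have h_slice := mellin_eq_of_eq_cpow_mul_comp_inv
    (B := fun v => ∫ t : ℝ, Complex.exp (-((π * t ^ 2 : ℝ) * v)) * 𝓕 (f : E → ℂ) (t • ξ))
    (fun v hv => integral_gaussian_comp_inner_mul f.integrable ξ hv) (-z / 2)
  rw [hf_fourier, h_exponent, h_ridge, h_line, h_neg] at h_slice
  exact h_slice

lemma ridgeMoment_fourierInv_eq_of_re_neg {φ : 𝓢(E, ℂ)} (hφ : 0 ∉ tsupport φ) {ξ : E}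
    (hξ : ‖ξ‖ = 1) {z : ℂ} (hz_neg_one : -1 < z.re) (hz_zero : z.re < 0) :
    ridgeMoment (𝓕⁻ φ) ξ z = absCpowFourierConst z * lineMoment φ ξ (-1 - z) := by
  have h_re : 0 < (-z / 2).re := by rw [Complex.div_ofNat_re, Complex.neg_re]; linarith
  have hΓ : Complex.Gamma (-z / 2) ≠ 0 := Complex.Gamma_ne_zero_of_re_pos h_re
  have hπ : (π : ℂ) ≠ 0 := Complex.ofReal_ne_zero.2 Real.pi_ne_zero
  have hπ_pow : (π : ℂ) ^ (z / 2) ≠ 0 := by simp [Complex.cpow_eq_zero_iff, hπ]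
  refine mul_left_cancel₀ (mul_ne_zero hΓ hπ_pow) ?_
  rw [Gamma_mul_ridgeMoment_fourierInv_eq hφ hξ hz_neg_one hz_zero, absCpowFourierConst,
    show (-1 - z) / 2 = z / 2 + (-z - 1 / 2) by ring, Complex.cpow_add _ _ hπ]
  rw [neg_div] at hΓ ⊢
  field_simp

lemma differentiableAt_ridgeMoment (f : 𝓢(E, ℂ)) {ξ : E} (hξ : ‖ξ‖ = 1) {z : ℂ}
    (hz : -1 < z.re) : DifferentiableAt ℂ (ridgeMoment f ξ) z := by
  have hξ_ne : ξ ≠ 0 := ne_zero_of_norm_ne_zero (by simp [hξ])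
  refine differentiableAt_integral_ofReal_cpow_mul (by fun_prop)
    ((ae_inner_ne_zero hξ_ne).mono fun x => abs_pos.2) f.continuous.aestronglyMeasurable ?_
  filter_upwards [lt_mem_nhds hz] with a ha
  exact integrable_abs_inner_rpow_mul_norm hξ ha f

theorem ridgeMoment_fourierInv_eq {φ : 𝓢(E, ℂ)} (hφ : 0 ∉ tsupport φ) {ξ : E} (hξ : ‖ξ‖ = 1)
    {z : ℂ} (hz : -1 < z.re) :
    ridgeMoment (𝓕⁻ φ) ξ z = absCpowFourierConst z * lineMoment φ ξ (-1 - z) := by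
  let halfPlane : Set ℂ := {w | -1 < w.re}
  have h_open : IsOpen halfPlane := isOpen_lt continuous_const Complex.continuous_re
  have h_left : AnalyticOnNhd ℂ (ridgeMoment (𝓕⁻ φ) ξ) halfPlane :=
    DifferentiableOn.analyticOnNhd (fun w hw =>
      (differentiableAt_ridgeMoment _ hξ hw).differentiableWithinAt) h_open
  have h_right : AnalyticOnNhd ℂ
      (fun w => absCpowFourierConst w * lineMoment φ ξ (-1 - w)) halfPlane :=
    DifferentiableOn.analyticOnNhd (fun w hw =>
      ((differentiableAt_absCpowFourierConst hw).mul
        ((differentiable_lineMoment hφ hξ).differentiableAt.comp w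
          (by fun_prop))).differentiableWithinAt) h_open
  have h_strip : ridgeMoment (𝓕⁻ φ) ξ =ᶠ[𝓝 (-1 / 2)]
      fun w => absCpowFourierConst w * lineMoment φ ξ (-1 - w) := by
    filter_upwards [(isOpen_lt continuous_const Complex.continuous_re).mem_nhds
        (show -1 < (-1 / 2 : ℂ).re by norm_num),
      (isOpen_lt Complex.continuous_re continuous_const).mem_nhds
        (show (-1 / 2 : ℂ).re < 0 by norm_num)] with w hw_neg_one hw_zero
    exact ridgeMoment_fourierInv_eq_of_re_neg hφ hξ hw_neg_one hw_zero
  exact h_left.eqOn_of_preconnected_of_eventuallyEq h_right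
    (convex_halfSpace_re_gt (-1)).isPreconnected
    (show -1 < (-1 / 2 : ℂ).re by norm_num) h_strip hz

end RidgeFunctions

section RealExponents

variable {E : Type*} [NormedAddCommGroup E] [InnerProductSpace ℝ E] [FiniteDimensional ℝ E]
  [MeasurableSpace E] [BorelSpace E]

lemma two_pi_rpow_mul_absCpowFourierConst (q : ℝ) :
    (((2 * π) ^ (q + 1) : ℝ) : ℂ) * absCpowFourierConst q = Cq q := by
  have hπ_pow : (2 * π) ^ (q + 1) * π ^ (-q - 1 / 2) = 2 ^ (q + 1) * √π := by
    rw [Real.mul_rpow zero_le_two Real.pi_nonneg, mul_assoc, ← Real.rpow_add Real.pi_pos,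
      Real.sqrt_eq_rpow]
    ring_nf
  have h_const : absCpowFourierConst q =
      ((π ^ (-q - 1 / 2) * Real.Gamma ((q + 1) / 2) * (Real.Gamma (-q / 2))⁻¹ : ℝ) : ℂ) := by
    simp [absCpowFourierConst, Complex.ofReal_cpow Real.pi_nonneg, ← Complex.Gamma_ofReal]
  rw [h_const, ← Complex.ofReal_mul, Cq, ← hπ_pow]
  ring_nf

/-- The Fourier transform with kernel `e^{-i⟪y, x⟫}`, as a Schwartz function. -/
def angularFourier (φ : 𝓢(E, ℂ)) : 𝓢(E, ℂ) :=
  SchwartzMap.compCLMOfContinuousLinearEquiv ℂ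
    (ContinuousLinearEquiv.smulLeft (Units.mk0 (2 * π)⁻¹ (by positivity))) (𝓕 φ)

lemma angularFourier_eq_fourier_smul (φ : 𝓢(E, ℂ)) (x : E) :
    angularFourier φ x = 𝓕 φ ((2 * π)⁻¹ • x) := rfl

lemma angularFourier_apply (φ : 𝓢(E, ℂ)) (x : E) :
    angularFourier φ x = ∫ y, Complex.exp (-Complex.I * (⟪y, x⟫ : ℂ)) * φ y := by
  rw [angularFourier_eq_fourier_smul, SchwartzMap.fourier_coe, Real.fourier_eq']
  congr! 3 with y
  rw [real_inner_smul_right]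
  push_cast
  field_simp

lemma angularFourier_neg_two_pi_smul (φ : 𝓢(E, ℂ)) (x : E) :
    angularFourier φ (-(2 * π) • x) = 𝓕⁻ φ x := by
  rw [angularFourier_eq_fourier_smul, smul_smul, SchwartzMap.fourier_coe,
    SchwartzMap.fourierInv_coe, Real.fourierInv_eq_fourier_neg]
  rw [mul_neg, inv_mul_cancel₀ (by positivity), neg_one_smul]

lemma integral_abs_inner_rpow_mul_fourierInv {φ : 𝓢(E, ℂ)} (hφ : 0 ∉ tsupport φ) {ξ : E}
    (hξ : ‖ξ‖ = 1) {q : ℝ} (hq : -1 < q) :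
    ∫ x, ((|⟪x, ξ⟫| ^ q : ℝ) : ℂ) * 𝓕⁻ φ x =
      absCpowFourierConst q * ∫ t : ℝ, ((|t| ^ (-1 - q) : ℝ) : ℂ) * φ (t • ξ) := by
  have h := ridgeMoment_fourierInv_eq hφ hξ (z := q) hq
  simp only [ridgeMoment, lineMoment] at h
  simp only [Complex.ofReal_cpow (abs_nonneg _)]
  exact_mod_cast h

lemma integral_abs_inner_rpow_mul_angularFourier {φ : 𝓢(E, ℂ)} (hφ : 0 ∉ tsupport φ) {ξ : E}
    (hξ : ‖ξ‖ = 1) {q : ℝ} (hq : -1 < q) :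
    ∫ x, ((|⟪x, ξ⟫| ^ q : ℝ) : ℂ) * angularFourier φ x =
      (((2 * π) ^ (finrank ℝ E - 1) * Cq q : ℝ) : ℂ) *
        ∫ t : ℝ, ((|t| ^ (-1 - q) : ℝ) : ℂ) * φ (t • ξ) := by
  have h_dim : 1 ≤ finrank ℝ E :=
    finrank_pos_iff_exists_ne_zero.2 ⟨ξ, ne_zero_of_norm_ne_zero (by simp [hξ])⟩
  have h_scale (x : E) :
      ((|⟪-(2 * π) • x, ξ⟫| ^ q : ℝ) : ℂ) * angularFourier φ (-(2 * π) • x) =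
        (((2 * π) ^ q : ℝ) : ℂ) * (((|⟪x, ξ⟫| ^ q : ℝ) : ℂ) * 𝓕⁻ φ x) := by
    rw [angularFourier_neg_two_pi_smul, real_inner_smul_left, abs_mul, abs_neg,
      abs_of_pos Real.two_pi_pos, Real.mul_rpow Real.two_pi_pos.le (abs_nonneg _),
      Complex.ofReal_mul, mul_assoc]
  have h_subst := Measure.integral_comp_smul volume
    (fun x => ((|⟪x, ξ⟫| ^ q : ℝ) : ℂ) * angularFourier φ x) (-(2 * π))
  rw [abs_inv, abs_pow, abs_neg, abs_of_pos Real.two_pi_pos,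
    eq_inv_smul_iff₀ (by positivity)] at h_subst
  have h_pow : ((2 * π) ^ finrank ℝ E * (2 * π) ^ q : ℝ) =
      (2 * π) ^ (finrank ℝ E - 1) * (2 * π) ^ (q + 1) := by
    rw [Real.rpow_add_one Real.two_pi_pos.ne', ← mul_assoc, mul_right_comm, ← pow_succ,
      Nat.sub_add_cancel h_dim]
  calc ∫ x, ((|⟪x, ξ⟫| ^ q : ℝ) : ℂ) * angularFourier φ x
      = (((2 * π) ^ finrank ℝ E * (2 * π) ^ q : ℝ) : ℂ) *
          ∫ x, ((|⟪x, ξ⟫| ^ q : ℝ) : ℂ) * 𝓕⁻ φ x := by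
        rw [← h_subst, integral_congr_ae (.of_forall h_scale), integral_const_mul,
          Complex.real_smul, ← mul_assoc, Complex.ofReal_mul]
    _ = (((2 * π) ^ (finrank ℝ E - 1) * Cq q : ℝ) : ℂ) *
          ∫ t : ℝ, ((|t| ^ (-1 - q) : ℝ) : ℂ) * φ (t • ξ) := by
        rw [h_pow, integral_abs_inner_rpow_mul_fourierInv hφ hξ hq, Complex.ofReal_mul,
          Complex.ofReal_mul, ← two_pi_rpow_mul_absCpowFourierConst]
        ring

end RealExponents

section SignedMeasures

lemma csInt_const_mul {α : Type*} [MeasurableSpace α] (μ : SignedMeasure α) (c : ℂ)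
    (F : α → ℂ) : csInt μ (fun ξ => c * F ξ) = c * csInt μ F := by
  simp only [csInt, integral_const_mul, mul_sub]

lemma csInt_congr_ae {α : Type*} [MeasurableSpace α] {μ : SignedMeasure α} {F G : α → ℂ}
    (h : F =ᵐ[μ.totalVariation] G) : csInt μ F = csInt μ G := by
  obtain ⟨h_pos, h_neg⟩ := ae_add_measure_iff.1 h
  rw [csInt, csInt, integral_congr_ae h_pos, integral_congr_ae h_neg]

variable {E : Type*} [NormedAddCommGroup E] [InnerProductSpace ℝ E] [FiniteDimensional ℝ E]
  [MeasurableSpace E] [BorelSpace E] [Nontrivial E] {q : ℝ}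

lemma integrable_prod_abs_inner_rpow_mul {ν : Measure E} [IsFiniteMeasure ν]
    (hν : ∀ᵐ ξ ∂ν, ‖ξ‖ = 1) (hq : -1 < q) (f : 𝓢(E, ℂ)) :
    Integrable (fun p : E × E => ((|⟪p.2, p.1⟫| ^ q : ℝ) : ℂ) * f p.2) (ν.prod volume) := by
  obtain ⟨K, hK⟩ := exists_integral_abs_inner_rpow_mul_norm_le hq f
  have hf := f.continuous.measurable
  have h_meas : Measurable fun p : E × E => ((|⟪p.2, p.1⟫| ^ q : ℝ) : ℂ) * f p.2 := by fun_prop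
  have h_norm (ξ x : E) :
      ‖((|⟪x, ξ⟫| ^ q : ℝ) : ℂ) * f x‖ = |⟪x, ξ⟫| ^ q * ‖f x‖ := by
    rw [norm_mul, Complex.norm_real, Real.norm_of_nonneg (by positivity)]
  refine (integrable_prod_iff h_meas.aestronglyMeasurable).2 ⟨?_, ?_⟩
  · filter_upwards [hν] with ξ hξ
    exact (hK ξ hξ).1.mono' (by fun_prop) (.of_forall fun x => (h_norm ξ x).le)
  · refine (integrable_const K).mono'
      h_meas.norm.stronglyMeasurable.integral_prod_right'.aestronglyMeasurable ?_
    filter_upwards [hν] with ξ hξ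
    rw [Real.norm_of_nonneg (integral_nonneg fun _ => norm_nonneg _)]
    simpa only [h_norm] using (hK ξ hξ).2

lemma integrable_integral_abs_inner_rpow_mul {ν : Measure E} [IsFiniteMeasure ν]
    (hν : ∀ᵐ ξ ∂ν, ‖ξ‖ = 1) (hq : -1 < q) (f : 𝓢(E, ℂ)) :
    Integrable fun x => ((∫ ξ, |⟪x, ξ⟫| ^ q ∂ν : ℝ) : ℂ) * f x := by
  simpa only [integral_mul_const, integral_complex_ofReal] using
    (integrable_prod_abs_inner_rpow_mul hν hq f).integral_prod_right

lemma integral_integral_abs_inner_rpow_mul {ν : Measure E} [IsFiniteMeasure ν]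
    (hν : ∀ᵐ ξ ∂ν, ‖ξ‖ = 1) (hq : -1 < q) (f : 𝓢(E, ℂ)) :
    ∫ x, ((∫ ξ, |⟪x, ξ⟫| ^ q ∂ν : ℝ) : ℂ) * f x =
      ∫ ξ, (∫ x, ((|⟪x, ξ⟫| ^ q : ℝ) : ℂ) * f x) ∂ν := by
  simpa only [integral_mul_const, integral_complex_ofReal] using
    (integral_integral_swap (f := fun ξ x => ((|⟪x, ξ⟫| ^ q : ℝ) : ℂ) * f x)
      (integrable_prod_abs_inner_rpow_mul hν hq f)).symm

lemma integral_sInt_abs_inner_rpow_mul {μ : SignedMeasure E}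
    (hμ : ∀ᵐ ξ ∂μ.totalVariation, ‖ξ‖ = 1) (hq : -1 < q) (f : 𝓢(E, ℂ)) :
    ∫ x, ((sInt μ fun ξ => |⟪x, ξ⟫| ^ q : ℝ) : ℂ) * f x =
      csInt μ (fun ξ => ∫ x, ((|⟪x, ξ⟫| ^ q : ℝ) : ℂ) * f x) := by
  obtain ⟨h_pos, h_neg⟩ := ae_add_measure_iff.1 hμ
  simp only [sInt, Complex.ofReal_sub, sub_mul]
  rw [csInt, integral_sub (integrable_integral_abs_inner_rpow_mul h_pos hq f)
    (integrable_integral_abs_inner_rpow_mul h_neg hq f),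
    integral_integral_abs_inner_rpow_mul h_pos hq, integral_integral_abs_inner_rpow_mul h_neg hq]

theorem statement2_general (hq : -1 < q) (_hqne : ∀ m : ℤ, q ≠ 2 * (m : ℝ))
    (μ : SignedMeasure E) (hμs : μ.totalVariation (sphere (0 : E) 1)ᶜ = 0)
    (φ : 𝓢(E, ℂ)) (hφ0 : 0 ∉ tsupport φ) :
    ∫ x, ((sInt μ fun ξ => |⟪x, ξ⟫| ^ q : ℝ) : ℂ) *
        ∫ y, Complex.exp (-Complex.I * (⟪y, x⟫ : ℂ)) * φ y =
      (((2 * π) ^ (finrank ℝ E - 1) * Cq q : ℝ) : ℂ) *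
        csInt μ (fun ξ => ∫ t : ℝ, ((|t| ^ (-1 - q) : ℝ) : ℂ) * φ (t • ξ)) := by
  have h_sphere : ∀ᵐ ξ ∂μ.totalVariation, ‖ξ‖ = 1 := by
    filter_upwards [mem_ae_iff.2 hμs] with ξ hξ
    exact mem_sphere_zero_iff_norm.1 hξ
  simp only [← angularFourier_apply]
  rw [integral_sInt_abs_inner_rpow_mul h_sphere hq, ← csInt_const_mul]
  refine csInt_congr_ae (h_sphere.mono fun ξ hξ => ?_)
  exact integral_abs_inner_rpow_mul_angularFourier hφ0 hξ hq

end SignedMeasures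

end FourierOfRidgePowers

/-- for `q > -1` not an even integer and a finite symmetric Borel signed
measure `μ` on the unit sphere `Ω`, the tempered-distribution Fourier transform of
`G(x) = ∫_Ω |(x,ξ)|^q dμ(ξ)` satisfies, for every even Schwartz `φ` supported away from `0`,
`(Ĝ, φ) = (2π)^{n-1} C_q ∫_Ω (∫_ℝ |t|^{-1-q} φ(tξ) dt) dμ(ξ)`;
here `(Ĝ, φ) = ∫ G(x) φ̂(x) dx`. -/
theorem statement2 (n : ℕ) (hn : 1 ≤ n) (q : ℝ) (hq : -1 < q)
    (hqne : ∀ m : ℤ, q ≠ 2 * (m : ℝ))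
    (μ : SignedMeasure (EuclideanSpace ℝ (Fin n)))
    (hμs : μ.totalVariation (sphere (0 : EuclideanSpace ℝ (Fin n)) 1)ᶜ = 0)
    (hμsym : ∀ A : Set (EuclideanSpace ℝ (Fin n)), MeasurableSet A → μ A = μ (Neg.neg ⁻¹' A))
    (φ : SchwartzMap (EuclideanSpace ℝ (Fin n)) ℂ)
    (hφe : ∀ x, φ (-x) = φ x)
    (hφ0 : (0 : EuclideanSpace ℝ (Fin n)) ∉ tsupport ⇑φ) :
    ∫ x, ((sInt μ fun ξ => |⟪x, ξ⟫| ^ q : ℝ) : ℂ) * ftNU ⇑φ x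
      = (((2 * π) ^ (n - 1) * Cq q : ℝ) : ℂ)
          * csInt μ (fun ξ => ∫ t : ℝ, ((|t| ^ (-1 - q) : ℝ) : ℂ) * φ (t • ξ)) := by
  have : Nontrivial (EuclideanSpace ℝ (Fin n)) :=
    Module.nontrivial_of_finrank_pos (R := ℝ) (by rwa [finrank_euclideanSpace_fin])
  simpa only [ftNU, finrank_euclideanSpace_fin] using statement2_general hq hqne μ hμs φ hφ0

end
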